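/- Let d > 2 be an integer, J an admissible kernel on ℤ^d, and G ∈ 𝒢 with (J,G) satisfying Assumption G. Let 0 ≤ β' ≤ β < β_c and Z := (β−β')·χ(β'). Then: (i) 1 − χ(β')/χ(β) ≤ Z, and if E(β) < 1 also Z ≤ (1 − χ(β')/χ(β))/(1 − E(β)); (ii) if E(β) ≤ (1/4)·χ(β')/χ(β), then 1 − χ(β')/χ(β) ≤ Z ≤ 1 − (1/2)·χ(β')/χ(β); (iii) if E(β) ≤ min{(1/8)·(ξ(β')/ξ(β))², 1/2}, then 1 − 2·(ξ(β')/ξ(β))² ≤ Z ≤ 1 − (1/4)·(ξ(β')/ξ(β))². -/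

import Mathlib

open scoped ENNReal

noncomputable section

namespace Blackbox

/-- Supremum norm of a lattice point. -/
def supNorm {d : ℕ} (x : Fin d → ℤ) : ℝ :=
  ((Finset.univ.sup fun i => (x i).natAbs : ℕ) : ℝ)

/-- Squared Euclidean norm of a lattice point. -/
def sqNorm {d : ℕ} (x : Fin d → ℤ) : ℝ :=
  ∑ i, ((x i : ℝ)) ^ 2

/-- Invariance under coordinate permutations and sign flips of individual coordinates. -/
def IsSymmFun {d : ℕ} {α : Type*} (f : (Fin d → ℤ) → α) : Prop :=
  ∀ (π : Equiv.Perm (Fin d)) (e : Fin d → Bool) (x : Fin d → ℤ),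
    f (fun i => (if e i then -1 else 1) * x (π i)) = f x

/-- First coordinate (dot product with `e₁`). -/
def e1 {d : ℕ} {α : Type*} [Zero α] (y : Fin d → α) : α :=
  if h : 0 < d then y ⟨0, h⟩ else 0

/-- An admissible kernel on `ℤ^d` with constant `c₀`. -/
structure AdmissibleKernel (d : ℕ) (c₀ : ℝ) where
  J : (Fin d → ℤ) → ℝ
  nonneg : ∀ x, 0 ≤ J x
  zero_at_zero : J 0 = 0
  summable : Summable J
  norm_one : ∑' x, J x = 1
  symm : IsSymmFun J
  R : ℝ
  R_ge_one : 1 ≤ R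
  range_le : ∀ x, 0 < J x → supNorm x ≤ R
  range_attained : ∃ x, 0 < J x ∧ supNorm x = R
  summable_sq : Summable fun x => sqNorm x * J x
  sigma_lower : c₀ * R ≤ Real.sqrt (∑' x, sqNorm x * J x)
  J_upper : ∀ x, J x ≤ c₀⁻¹ / R ^ d

/-- `σ_J`, the square root of the variance of the kernel. -/
def AdmissibleKernel.sigma {d : ℕ} {c₀ : ℝ} (K : AdmissibleKernel d c₀) : ℝ :=
  Real.sqrt (∑' x, sqNorm x * K.J x)

/-- A family `G ∈ 𝒢` together with an admissible kernel `J` such that `(J,G)` satisfies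
Assumption G (with error-term family `H`). -/
structure Model (d : ℕ) (c₀ : ℝ) where
  K : AdmissibleKernel d c₀
  G : ℝ → (Fin d → ℤ) → ℝ≥0∞
  βc : ℝ≥0∞
  βc_pos : 0 < βc
  init : ∀ x, G 0 x = if x = 0 then 1 else 0
  G' : ℝ → (Fin d → ℤ) → ℝ
  mono : ∀ (x : Fin d → ℤ) ⦃β₁ β₂ : ℝ⦄, 0 ≤ β₁ → β₁ ≤ β₂ →
    ENNReal.ofReal β₂ ≤ βc → G β₁ x ≤ G β₂ x
  deriv : ∀ (x : Fin d → ℤ) ⦃β : ℝ⦄, 0 ≤ β → ENNReal.ofReal β < βc →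
    HasDerivWithinAt (fun t => (G t x).toReal) (G' β x) (Set.Ici 0) β
  symm : ∀ β, IsSymmFun (G β)
  expDecay : ∀ ⦃β : ℝ⦄, 0 ≤ β → ENNReal.ofReal β < βc →
    ∃ C > (0:ℝ), ∃ c > (0:ℝ), ∀ x, G β x ≤ ENNReal.ofReal (C * Real.exp (-c * supNorm x))
  limit : βc ≠ ⊤ → ∀ x, G βc.toReal x = ⨆ β ∈ Set.Ico (0 : ℝ) βc.toReal, G β x
  I1 : ∀ ⦃β' β : ℝ⦄, 0 ≤ β' → β' ≤ β → ENNReal.ofReal β < βc →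
    ∀ x, G β x ≤ G β' x + ENNReal.ofReal (β - β') *
      ∑' p : (Fin d → ℤ) × (Fin d → ℤ),
        G β' p.1 * ENNReal.ofReal (K.J p.2) * G β (x - p.1 - p.2)
  H : ℝ → (Fin d → ℤ) → ℝ
  H_nonneg : ∀ β x, 0 ≤ H β x
  H_zero : ∀ x, H 0 x = 0
  H_symm : ∀ β x, H β (-x) = H β x
  H_cont : ∀ x, ContinuousOn (fun β => H β x)
    {β : ℝ | 0 ≤ β ∧ ENNReal.ofReal β < βc}
  H_expDecay : ∀ ⦃β : ℝ⦄, 0 ≤ β → ENNReal.ofReal β < βc →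
    ∃ C > (0:ℝ), ∃ c > (0:ℝ), ∀ x, H β x ≤ C * Real.exp (-c * supNorm x)
  I2 : ∀ ⦃β : ℝ⦄, 0 ≤ β → ENNReal.ofReal β < βc → ∀ x,
    (∑' p : (Fin d → ℤ) × (Fin d → ℤ),
      (G β p.1).toReal * (K.J p.2 - H β p.2) * (G β (x - p.1 - p.2)).toReal)
      ≤ G' β x

namespace Model

variable {d : ℕ} {c₀ : ℝ}

def sigma (M : Model d c₀) : ℝ := M.K.sigma

/-- `F_β = J * G_β`. -/
def F (M : Model d c₀) (β : ℝ) (x : Fin d → ℤ) : ℝ≥0∞ :=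
  ∑' y, ENNReal.ofReal (M.K.J y) * M.G β (x - y)

/-- The susceptibility `χ(β)`. -/
def chi (M : Model d c₀) (β : ℝ) : ℝ≥0∞ := ∑' x, M.G β x

/-- `ξ(β)²`. -/
def xiSq (M : Model d c₀) (β : ℝ) : ℝ≥0∞ :=
  (∑' x, ENNReal.ofReal (sqNorm x) * M.F β x) / M.chi β

/-- The correlation length of order two, `ξ(β)`. -/
def xi (M : Model d c₀) (β : ℝ) : ℝ := Real.sqrt (M.xiSq β).toReal

/-- The error term `E(β)`. -/
def E (M : Model d c₀) (β : ℝ) : ℝ≥0∞ :=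
  ⨆ t ∈ Set.Icc (0 : ℝ) β,
    (ENNReal.ofReal (∑' x, M.H t x) +
      ENNReal.ofReal (∑' x, sqNorm x * M.H t x) / M.xiSq t)

/-- `β(δ)`. -/
def betaOf (M : Model d c₀) (δ : ℝ) : ℝ :=
  sSup {β : ℝ | 0 ≤ β ∧ ENNReal.ofReal β < M.βc ∧ M.E β < ENNReal.ofReal δ}

/-- One-step distribution of the effective random walk at parameter `β`. -/
def effStep (M : Model d c₀) (β : ℝ) (y : Fin d → ℤ) : ℝ≥0∞ :=
  M.F β y / M.chi β

/-- `k`-step distribution of the effective random walk at parameter `β`. -/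
def effIter (M : Model d c₀) (β : ℝ) : ℕ → (Fin d → ℤ) → ℝ≥0∞
  | 0 => fun x => if x = 0 then 1 else 0
  | n + 1 => fun x => ∑' y, M.effStep β y * M.effIter β n (x - y)

/-- Moment generating function `M_β(s)` of the first coordinate of one step of the
effective random walk. -/
def Mgf (M : Model d c₀) (β s : ℝ) : ℝ≥0∞ :=
  ∑' y : Fin d → ℤ, M.effStep β y * ENNReal.ofReal (Real.exp (s / M.xi β * ((e1 y : ℤ) : ℝ)))

end Model

end Blackbox
open Blackbox

/-!
Summed over `ℤ^d`, Assumption G gives `(1 - E) χ² ≤ χ' ≤ χ²`, so `1 / χ` is almost linear in `β`;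
comparing its values at the two endpoints gives (i) and (ii).

For (iii), take second moments of `∂_β G` instead. The cross terms in the second moment of
`G * J * G` vanish by symmetry, and what remains is `(1 - 2E) χ ≤ (ξ²)' / ξ² ≤ (1 + E) χ`. Hence
`ξ²` and `χ` have nearly equal logarithmic derivatives, and the ratio `q = ξ(β')² / ξ(β)²` agrees
with `χ(β') / χ(β)` up to a factor `q ^ (±O(E))`. This factor is bounded because
`E log (1 / q) ≤ q log (1 / q) / 8 ≤ 1 / 8`, so (iii) reduces to (i).
-/

namespace Blackbox

/-! ### Moments of functions on the lattice -/

section Lattice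

variable {d : ℕ}

lemma supNorm_nonneg (x : Fin d → ℤ) : 0 ≤ supNorm x := Nat.cast_nonneg _

lemma natAbs_le_supNorm (x : Fin d → ℤ) (i : Fin d) : ((x i).natAbs : ℝ) ≤ supNorm x :=
  Nat.cast_le.2 (Finset.le_sup (f := fun i => (x i).natAbs) (Finset.mem_univ i))

lemma sqNorm_nonneg (x : Fin d → ℤ) : 0 ≤ sqNorm x := Finset.sum_nonneg fun _ _ => sq_nonneg _

lemma sqNorm_pos {x : Fin d → ℤ} (hx : x ≠ 0) : 0 < sqNorm x := by
  obtain ⟨i, hi⟩ := Function.ne_iff.1 hx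
  have hi' : (x i : ℝ) ≠ 0 := Int.cast_ne_zero.2 hi
  exact Finset.sum_pos' (fun _ _ => sq_nonneg _) ⟨i, Finset.mem_univ i, by positivity⟩

lemma sqNorm_le_mul_supNorm_sq (x : Fin d → ℤ) : sqNorm x ≤ d * supNorm x ^ 2 := by
  have hcoord (i : Fin d) : (x i : ℝ) ^ 2 ≤ supNorm x ^ 2 := by
    rw [← sq_abs]
    gcongr
    simpa [Nat.cast_natAbs] using natAbs_le_supNorm x i
  simpa [sqNorm] using Finset.sum_le_card_nsmul Finset.univ _ _ fun i _ => hcoord i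

lemma sqNorm_add_add_sqNorm_sub (x y : Fin d → ℤ) :
    sqNorm (x + y) + sqNorm (x - y) = 2 * (sqNorm x + sqNorm y) := by
  simp only [sqNorm, Finset.mul_sum, ← Finset.sum_add_distrib]
  refine Finset.sum_congr rfl fun i _ => ?_
  push_cast [Pi.add_apply, Pi.sub_apply]
  ring

lemma sqNorm_add_le (x y : Fin d → ℤ) : sqNorm (x + y) ≤ 2 * (sqNorm x + sqNorm y) := by
  linarith [sqNorm_add_add_sqNorm_sub x y, sqNorm_nonneg (x - y)]

lemma summable_pow_natAbs {r : ℝ} (hr0 : 0 ≤ r) (hr1 : r < 1) :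
    Summable fun k : ℤ => r ^ k.natAbs :=
  .of_nat_of_neg (by simpa using summable_geometric_of_lt_one hr0 hr1)
    (by simpa using summable_geometric_of_lt_one hr0 hr1)

lemma summable_prod_apply {ι : Type*} {f : ι → ℝ} (hf0 : ∀ i, 0 ≤ f i) (hf : Summable f) (n : ℕ) :
    Summable fun x : Fin n → ι => ∏ i, f (x i) := by
  induction n with
  | zero => exact .of_finite
  | succ n ih =>
    rw [← (Fin.consEquiv fun _ : Fin (n + 1) => ι).summable_iff]
    refine (hf.mul_of_nonneg ih hf0 fun x => Finset.prod_nonneg fun i _ => hf0 (x i)).congr ?_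
    simp [Fin.prod_univ_succ, Fin.consEquiv]

lemma summable_exp_neg_mul_supNorm {c : ℝ} (hc : 0 < c) :
    Summable fun x : Fin d → ℤ => Real.exp (-c * supNorm x) := by
  set r := Real.exp (-(c / (d + 1)))
  have hr1 : r < 1 := Real.exp_lt_one_iff.2 (neg_neg_of_pos (by positivity))
  refine .of_nonneg_of_le (fun x => (Real.exp_pos _).le) (fun x => ?_)
    (summable_prod_apply (fun k : ℤ => by positivity)
      (summable_pow_natAbs (Real.exp_pos _).le hr1) d)
  have hsum : ∑ i, ((x i).natAbs : ℝ) ≤ (d + 1) * supNorm x := by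
    have := Finset.sum_le_card_nsmul Finset.univ _ _ fun i _ => natAbs_le_supNorm x i
    simp only [Finset.card_univ, Fintype.card_fin, nsmul_eq_mul] at this
    linarith [supNorm_nonneg x]
  calc Real.exp (-c * supNorm x)
      = Real.exp (-(c / (d + 1)) * ((d + 1) * supNorm x)) := by congr 1; field_simp
    _ ≤ Real.exp (-(c / (d + 1)) * ∑ i, ((x i).natAbs : ℝ)) :=
        Real.exp_le_exp.2 (mul_le_mul_of_nonpos_left hsum (neg_nonpos.2 (by positivity)))
    _ = ∏ i, r ^ (x i).natAbs := by
        simp only [r, Finset.mul_sum, Real.exp_sum, ← Real.exp_nat_mul, mul_comm]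

lemma summable_sqNorm_mul_exp_neg_mul_supNorm {c : ℝ} (hc : 0 < c) :
    Summable fun x : Fin d → ℤ => sqNorm x * Real.exp (-c * supNorm x) := by
  refine .of_nonneg_of_le (fun x => mul_nonneg (sqNorm_nonneg x) (Real.exp_pos _).le) (fun x => ?_)
    ((summable_exp_neg_mul_supNorm (half_pos hc)).mul_left (d * (8 / c ^ 2)))
  have hs := supNorm_nonneg x
  have hsq := sqNorm_le_mul_supNorm_sq x
  set s := supNorm x
  have hquad : s ^ 2 ≤ 8 / c ^ 2 * Real.exp (c / 2 * s) := by
    have hexp := Real.quadratic_le_exp_of_nonneg (x := c / 2 * s) (by positivity)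
    have hlin : 0 ≤ c / 2 * s := by positivity
    calc s ^ 2 = 8 / c ^ 2 * ((c / 2 * s) ^ 2 / 2) := by field_simp; ring
      _ ≤ 8 / c ^ 2 * Real.exp (c / 2 * s) := by gcongr; linarith
  calc sqNorm x * Real.exp (-c * s)
      ≤ d * (8 / c ^ 2 * Real.exp (c / 2 * s)) * Real.exp (-c * s) := by
        gcongr; exact hsq.trans (by gcongr)
    _ = d * (8 / c ^ 2) * (Real.exp (c / 2 * s) * Real.exp (-c * s)) := by ring
    _ = d * (8 / c ^ 2) * Real.exp (-(c / 2) * s) := by rw [← Real.exp_add]; ring_nf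

/-- Exponential decay at infinity, as an upper bound only since it is applied to nonnegative
functions. -/
def HasExpDecay (f : (Fin d → ℤ) → ℝ) : Prop :=
  ∃ C > 0, ∃ c > 0, ∀ x, f x ≤ C * Real.exp (-c * supNorm x)

/-- Absolute convergence of the total mass and of the second moment of a function. -/
structure HasSecondMoment (f : (Fin d → ℤ) → ℝ) : Prop where
  summable : Summable f
  summable_sqNorm_mul : Summable fun x => sqNorm x * f x

/-- The second moment `∑ |x|₂² f(x)`, of interest under `HasSecondMoment f`. -/
def secondMoment (f : (Fin d → ℤ) → ℝ) : ℝ := ∑' x, sqNorm x * f x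

lemma secondMoment_nonneg {f : (Fin d → ℤ) → ℝ} (hf : ∀ x, 0 ≤ f x) : 0 ≤ secondMoment f :=
  tsum_nonneg fun x => mul_nonneg (sqNorm_nonneg x) (hf x)

lemma HasSecondMoment.of_nonneg_of_le {f g : (Fin d → ℤ) → ℝ} (hg : HasSecondMoment g)
    (hf : ∀ x, 0 ≤ f x) (hfg : ∀ x, f x ≤ g x) : HasSecondMoment f where
  summable := .of_nonneg_of_le hf hfg hg.summable
  summable_sqNorm_mul := .of_nonneg_of_le (fun x => mul_nonneg (sqNorm_nonneg x) (hf x))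
    (fun x => mul_le_mul_of_nonneg_left (hfg x) (sqNorm_nonneg x)) hg.summable_sqNorm_mul

lemma HasSecondMoment.sub {f g : (Fin d → ℤ) → ℝ} (hf : HasSecondMoment f)
    (hg : HasSecondMoment g) : HasSecondMoment fun x => f x - g x where
  summable := hf.summable.sub hg.summable
  summable_sqNorm_mul := by
    simpa only [mul_sub] using hf.summable_sqNorm_mul.sub hg.summable_sqNorm_mul

lemma HasExpDecay.hasSecondMoment {f : (Fin d → ℤ) → ℝ} (hf : HasExpDecay f)
    (hf0 : ∀ x, 0 ≤ f x) : HasSecondMoment f := by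
  obtain ⟨C, -, c, hc, hfC⟩ := hf
  have hexp : HasSecondMoment fun x : Fin d → ℤ => C * Real.exp (-c * supNorm x) :=
    { summable := (summable_exp_neg_mul_supNorm hc).mul_left C
      summable_sqNorm_mul := by
        simpa only [mul_left_comm] using
          (summable_sqNorm_mul_exp_neg_mul_supNorm hc).mul_left C }
  exact hexp.of_nonneg_of_le hf0 hfC

lemma HasSecondMoment.secondMoment_le_secondMoment {f g : (Fin d → ℤ) → ℝ}
    (hf : HasSecondMoment f) (hg : HasSecondMoment g) (hfg : ∀ x, f x ≤ g x) :
    secondMoment f ≤ secondMoment g :=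
  hf.summable_sqNorm_mul.tsum_le_tsum
    (fun x => mul_le_mul_of_nonneg_left (hfg x) (sqNorm_nonneg x)) hg.summable_sqNorm_mul

lemma HasSecondMoment.secondMoment_sub {f g : (Fin d → ℤ) → ℝ} (hf : HasSecondMoment f)
    (hg : HasSecondMoment g) :
    secondMoment (fun x => f x - g x) = secondMoment f - secondMoment g := by
  simp only [secondMoment, mul_sub]
  exact hf.summable_sqNorm_mul.tsum_sub hg.summable_sqNorm_mul

end Lattice

/-! ### Convolution -/

section Convolution

variable {V : Type*} [AddCommGroup V] {f g k : V → ℝ}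

/-- Convolution of real functions on a discrete group, of interest for summable functions. -/
def conv (f g : V → ℝ) (x : V) : ℝ := ∑' y, f y * g (x - y)

lemma conv_nonneg (hf : ∀ x, 0 ≤ f x) (hg : ∀ x, 0 ≤ g x) (x : V) : 0 ≤ conv f g x :=
  tsum_nonneg fun y => mul_nonneg (hf y) (hg (x - y))

lemma summable_mul_apply_sub (hf : Summable f) (hg : Summable g) (x : V) :
    Summable fun y => f y * g (x - y) :=
  (summable_mul_of_summable_norm hf.norm hg.norm).comp_injective
    (i := fun y => (y, x - y)) fun _ _ h => (Prod.ext_iff.1 h).1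

lemma conv_le_conv {f' g' : V → ℝ} (hf : Summable f) (hg : Summable g) (hf' : Summable f')
    (hg' : Summable g') (hf0 : ∀ x, 0 ≤ f x) (hg0 : ∀ x, 0 ≤ g x) (hff' : ∀ x, f x ≤ f' x)
    (hgg' : ∀ x, g x ≤ g' x) (x : V) : conv f g x ≤ conv f' g' x :=
  (summable_mul_apply_sub hf hg x).tsum_le_tsum
    (fun y => mul_le_mul (hff' y) (hgg' _) (hg0 _) ((hf0 y).trans (hff' y)))
    (summable_mul_apply_sub hf' hg' x)

lemma ofReal_conv (hf : Summable f) (hg : Summable g) (hf0 : ∀ x, 0 ≤ f x) (hg0 : ∀ x, 0 ≤ g x)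
    (x : V) :
    ENNReal.ofReal (conv f g x) = ∑' y, ENNReal.ofReal (f y) * ENNReal.ofReal (g (x - y)) := by
  rw [conv, ENNReal.ofReal_tsum_of_nonneg (fun y => mul_nonneg (hf0 y) (hg0 _))
    (summable_mul_apply_sub hf hg x)]
  exact tsum_congr fun y => ENNReal.ofReal_mul (hf0 y)

lemma hasSum_mul_conv (hf : Summable f) (hg : Summable g) {φ : V → ℝ} {T : ℝ}
    (hT : HasSum (fun p : V × V => φ (p.1 + p.2) * (f p.1 * g p.2)) T) :
    HasSum (fun x => φ x * conv f g x) T := by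
  let e : V × V ≃ V × V :=
    (Equiv.prodComm V V).trans (Equiv.prodShear (Equiv.refl V) Equiv.subRight)
  refine ((e.hasSum_iff).2 hT).prod_fiberwise fun x => ?_
  simpa [e, conv, Function.comp_def] using (summable_mul_apply_sub hf hg x).hasSum.mul_left (φ x)

lemma hasSum_conv (hf : Summable f) (hg : Summable g) :
    HasSum (conv f g) ((∑' x, f x) * ∑' x, g x) := by
  rw [tsum_mul_tsum_of_summable_norm hf.norm hg.norm]
  have hprod := (summable_mul_of_summable_norm hf.norm hg.norm).hasSum
  simpa using hasSum_mul_conv hf hg (φ := fun _ => 1) (by simpa using hprod)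

lemma conv_even (hf_even : Function.Even f) (hg_even : Function.Even g) :
    Function.Even (conv f g) := by
  intro x
  rw [conv, ← (Equiv.neg _).tsum_eq]
  refine tsum_congr fun y => ?_
  rw [Equiv.neg_apply, hf_even.eq, ← neg_sub', hg_even.eq]

lemma hasSum_conv_conv_self (hg : Summable g) (hk : Summable k) :
    HasSum (conv g (conv k g)) ((∑' x, k x) * (∑' x, g x) ^ 2) := by
  have hkg := hasSum_conv hk hg
  convert hasSum_conv hg hkg.summable using 1
  rw [hkg.tsum_eq]
  ring

lemma tsum_prod_eq_conv_conv (hf : Summable f) (hk : Summable k) (hg : Summable g) (x : V) :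
    ∑' p : V × V, f p.1 * k p.2 * g (x - p.1 - p.2) = conv f (conv k g) x := by
  have hkg := summable_mul_of_summable_norm hk.norm hg.norm
  have htriple : Summable fun p : V × V => f p.1 * (k p.2 * g (x - p.1 - p.2)) :=
    (summable_mul_of_summable_norm hf.norm hkg.norm).comp_injective
      (i := fun p : V × V => (p.1, p.2, x - p.1 - p.2)) fun p q h => by simp_all [Prod.ext_iff]
  simp only [mul_assoc]
  rw [htriple.tsum_prod' fun y => (summable_mul_apply_sub hk hg (x - y)).mul_left (f y)]
  simp only [tsum_mul_left, conv]

lemma tsum_ofReal_prod_eq_ofReal_conv_conv (hf : Summable f) (hk : Summable k)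
    (hg : Summable g) (hf0 : ∀ x, 0 ≤ f x) (hk0 : ∀ x, 0 ≤ k x) (hg0 : ∀ x, 0 ≤ g x) (x : V) :
    ∑' p : V × V, ENNReal.ofReal (f p.1) * ENNReal.ofReal (k p.2) *
      ENNReal.ofReal (g (x - p.1 - p.2)) = ENNReal.ofReal (conv f (conv k g) x) := by
  simp only [ofReal_conv hf (hasSum_conv hk hg).summable hf0 (conv_nonneg hk0 hg0),
    ofReal_conv hk hg hk0 hg0, ENNReal.tsum_prod', mul_assoc, ENNReal.tsum_mul_left]

end Convolution

section ConvolutionMoments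

variable {d : ℕ} {f g k : (Fin d → ℤ) → ℝ}

lemma summable_mul_sqNorm_prod (hf : HasSecondMoment f) (hg : HasSecondMoment g) :
    Summable fun p : (Fin d → ℤ) × (Fin d → ℤ) => sqNorm (p.1 + p.2) * (f p.1 * g p.2) := by
  have hleft := summable_mul_of_summable_norm hf.summable_sqNorm_mul.norm hg.summable.norm
  have hright := summable_mul_of_summable_norm hf.summable.norm hg.summable_sqNorm_mul.norm
  refine .of_norm_bounded ((hleft.norm.add hright.norm).mul_left 2) fun p => ?_
  simp only [norm_mul, Real.norm_of_nonneg (sqNorm_nonneg _)]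
  calc sqNorm (p.1 + p.2) * (‖f p.1‖ * ‖g p.2‖)
      ≤ 2 * (sqNorm p.1 + sqNorm p.2) * (‖f p.1‖ * ‖g p.2‖) := by
        gcongr; exact sqNorm_add_le p.1 p.2
    _ = _ := by ring

/-- The cross term in `|x + y|² = |x|² + 2⟨x, y⟩ + |y|²` cancels because `g` is even; averaging over
`y ↦ -y` and the parallelogram law make this visible without mentioning the inner product. -/
lemma hasSum_sqNorm_mul_conv (hf : HasSecondMoment f) (hg : HasSecondMoment g)
    (hg_even : Function.Even g) :
    HasSum (fun x => sqNorm x * conv f g x)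
      (secondMoment f * (∑' x, g x) + (∑' x, f x) * secondMoment g) := by
  refine hasSum_mul_conv hf.summable hg.summable ?_
  have hsum := (summable_mul_sqNorm_prod hf hg).hasSum
  set T := ∑' p : (Fin d → ℤ) × (Fin d → ℤ), sqNorm (p.1 + p.2) * (f p.1 * g p.2)
  have hleft := (summable_mul_of_summable_norm hf.summable_sqNorm_mul.norm hg.summable.norm).hasSum
  have hright := (summable_mul_of_summable_norm hf.summable.norm hg.summable_sqNorm_mul.norm).hasSum
  rw [← tsum_mul_tsum_of_summable_norm hf.summable_sqNorm_mul.norm hg.summable.norm] at hleft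
  rw [← tsum_mul_tsum_of_summable_norm hf.summable.norm hg.summable_sqNorm_mul.norm] at hright
  have hflip : HasSum (fun p : (Fin d → ℤ) × (Fin d → ℤ) =>
      sqNorm (p.1 - p.2) * (f p.1 * g p.2)) T := by
    simpa [Function.comp_def, hg_even.eq, ← sub_eq_add_neg] using
      ((Equiv.prodCongr (Equiv.refl _) (Equiv.neg _)).hasSum_iff).2 hsum
  have htwice : T + T = 2 * (secondMoment f * (∑' x, g x) + (∑' x, f x) * secondMoment g) :=
    (hsum.add hflip).unique <| by
      refine ((hleft.add hright).mul_left 2).congr_fun fun p => ?_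
      linear_combination (f p.1 * g p.2) * sqNorm_add_add_sqNorm_sub p.1 p.2
  have hT : T = secondMoment f * (∑' x, g x) + (∑' x, f x) * secondMoment g := by linarith
  rwa [hT] at hsum

lemma HasSecondMoment.conv (hf : HasSecondMoment f) (hg : HasSecondMoment g)
    (hg_even : Function.Even g) : HasSecondMoment (conv f g) where
  summable := (hasSum_conv hf.summable hg.summable).summable
  summable_sqNorm_mul := (hasSum_sqNorm_mul_conv hf hg hg_even).summable

lemma hasSum_sqNorm_mul_conv_conv_self (hg : HasSecondMoment g) (hk : HasSecondMoment k)
    (hg_even : Function.Even g) (hk_even : Function.Even k) :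
    HasSum (fun x => sqNorm x * conv g (conv k g) x)
      (2 * secondMoment g * (∑' x, g x) * (∑' x, k x) + secondMoment k * (∑' x, g x) ^ 2) := by
  have hmass := (hasSum_conv hk.summable hg.summable).tsum_eq
  have hmoment : secondMoment (conv k g) = _ := (hasSum_sqNorm_mul_conv hk hg hg_even).tsum_eq
  convert hasSum_sqNorm_mul_conv hg (hk.conv hg hg_even) (conv_even hk_even hg_even) using 1
  rw [hmass, hmoment]
  ring

lemma HasSecondMoment.conv_conv_self (hg : HasSecondMoment g) (hk : HasSecondMoment k)
    (hg_even : Function.Even g) (hk_even : Function.Even k) :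
    HasSecondMoment (Blackbox.conv g (Blackbox.conv k g)) :=
  hg.conv (hk.conv hg hg_even) (conv_even hk_even hg_even)

end ConvolutionMoments

/-! ### Differential inequalities -/

section DifferentialInequalities

variable {a b k p : ℝ} {f f' g g' : ℝ → ℝ}

lemma mul_sub_le_inv_sub_inv (hab : a ≤ b) (hf0 : ∀ t ∈ Set.Icc a b, 0 < f t)
    (hfc : ContinuousOn f (Set.Icc a b)) (hf : ∀ t ∈ Set.Ioo a b, HasDerivAt f (f' t) t)
    (hk : ∀ t ∈ Set.Ioo a b, k * f t ^ 2 ≤ f' t) : k * (b - a) ≤ (f a)⁻¹ - (f b)⁻¹ := by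
  have hderiv : ∀ t ∈ Set.Ioo a b, HasDerivAt (-f⁻¹) (f' t / f t ^ 2) t := by
    intro t ht
    simpa [neg_div] using ((hf t ht).inv (hf0 t (Set.Ioo_subset_Icc_self ht)).ne').neg
  have hgrowth := (convex_Icc a b).mul_sub_le_image_sub_of_le_deriv (C := k)
    (hfc.inv₀ fun t ht => (hf0 t ht).ne').neg
    (fun t ht => (hderiv t (by rwa [interior_Icc] at ht)).differentiableAt.differentiableWithinAt)
    (fun t ht => by
      rw [interior_Icc] at ht
      rw [(hderiv t ht).deriv, le_div_iff₀ (pow_pos (hf0 t (Set.Ioo_subset_Icc_self ht)) 2)]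
      exact hk t ht)
    a ⟨le_rfl, hab⟩ b ⟨hab, le_rfl⟩ hab
  rwa [Pi.neg_apply, Pi.neg_apply, Pi.inv_apply, Pi.inv_apply, neg_sub_neg] at hgrowth

lemma mul_log_div_le_mul_log_div (hab : a ≤ b) (hf0 : ∀ t ∈ Set.Icc a b, 0 < f t)
    (hfc : ContinuousOn f (Set.Icc a b)) (hf : ∀ t ∈ Set.Ioo a b, HasDerivAt f (f' t) t)
    (hg0 : ∀ t ∈ Set.Icc a b, 0 < g t) (hgc : ContinuousOn g (Set.Icc a b))
    (hg : ∀ t ∈ Set.Ioo a b, HasDerivAt g (g' t) t)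
    (hfg : ∀ t ∈ Set.Ioo a b, p * (f' t / f t) ≤ k * (g' t / g t)) :
    k * Real.log (g a / g b) ≤ p * Real.log (f a / f b) := by
  have ha : a ∈ Set.Icc a b := ⟨le_rfl, hab⟩
  have hb : b ∈ Set.Icc a b := ⟨hab, le_rfl⟩
  have hmono : MonotoneOn (fun t => k * Real.log (g t) - p * Real.log (f t)) (Set.Icc a b) := by
    refine monotoneOn_of_hasDerivWithinAt_nonneg (convex_Icc a b)
      (f' := fun t => k * (g' t / g t) - p * (f' t / f t)) ?_ ?_ ?_
    · exact ((hgc.log fun t ht => (hg0 t ht).ne').const_smul k).sub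
        ((hfc.log fun t ht => (hf0 t ht).ne').const_smul p)
    · rw [interior_Icc]
      intro t ht
      have ht' := Set.Ioo_subset_Icc_self ht
      exact ((((hg t ht).log (hg0 t ht').ne').const_mul k).sub
        (((hf t ht).log (hf0 t ht').ne').const_mul p)).hasDerivWithinAt
    · rw [interior_Icc]
      exact fun t ht => sub_nonneg.2 (hfg t ht)
  have hle : k * Real.log (g a) - p * Real.log (f a) ≤ k * Real.log (g b) - p * Real.log (f b) :=
    hmono ha hb hab
  rw [Real.log_div (hg0 a ha).ne' (hg0 b hb).ne', Real.log_div (hf0 a ha).ne' (hf0 b hb).ne']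
  linarith

end DifferentialInequalities

section LogRatio

variable {e q r : ℝ}

lemma mul_neg_log_le_of_le_div_eight (he0 : 0 ≤ e) (heq : e ≤ q / 8) :
    e * -Real.log q ≤ 1 / 8 := by
  rcases le_or_gt 0 (Real.log q) with hlog | hlog
  · nlinarith
  · rcases he0.eq_or_lt with rfl | hepos
    · norm_num
    have hq : 0 < q := by linarith
    have hentropy : q * -Real.log q ≤ 1 := by
      have := mul_le_mul_of_nonneg_left (Real.one_sub_inv_le_log_of_pos hq) hq.le
      have : q * (1 - q⁻¹) = q - 1 := by field_simp
      linarith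
    nlinarith

lemma le_two_mul_of_log_le (hq : 0 < q) (hr : 0 < r) (he0 : 0 ≤ e) (heq : e ≤ q / 8)
    (hlog : (1 + e) * Real.log r ≤ (1 - e) * Real.log q) : r ≤ 2 * q := by
  have hsmall := mul_neg_log_le_of_le_div_eight he0 heq
  have hdiff : Real.log r ≤ Real.log q + 1 / 4 := by
    by_contra! hcon
    nlinarith [mul_lt_mul_of_pos_left hcon (by linarith : 0 < 1 + e)]
  refine (Real.log_le_log_iff hr (by positivity)).1 ?_
  rw [Real.log_mul (by norm_num) hq.ne']
  linarith [Real.log_two_gt_d9]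

lemma two_thirds_mul_le_of_le_log (hq : 0 < q) (hr : 0 < r) (hr1 : r ≤ 1) (he0 : 0 ≤ e)
    (heq : e ≤ q / 8) (he : e ≤ 1 / 2) (hlog : Real.log q ≤ (1 - 2 * e) * Real.log r) :
    2 / 3 * q ≤ r := by
  have hsmall := mul_neg_log_le_of_le_div_eight he0 heq
  have hq1 : q ≤ 1 := by
    refine (Real.log_nonpos_iff hq.le).1 (hlog.trans ?_)
    exact mul_nonpos_of_nonneg_of_nonpos (by linarith) (Real.log_nonpos hr.le hr1)
  have hdiff : Real.log q - 1 / 3 ≤ Real.log r := by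
    by_contra! hcon
    nlinarith [mul_lt_mul_of_pos_left hcon (by linarith : 0 < 1 - 2 * e)]
  refine (Real.log_le_log_iff (by positivity) hr).1 ?_
  rw [Real.log_mul (by norm_num) hq.ne']
  linarith [Real.log_le_sub_one_of_pos (by norm_num : (0 : ℝ) < 2 / 3)]

end LogRatio

section QuotientDerivative

-- `(m' * X - m * X') / X ^ 2` is the derivative of `s + m / X`.

variable {X X' m m' s e h h₂ : ℝ}

lemma quotient_deriv_div_le (hX : 0 < X) (hm : 0 ≤ m) (hs : 0 < s) (he : 0 ≤ e)
    (hX' : (1 - e) * X ^ 2 ≤ X') (hm' : m' ≤ 2 * m * X + s * X ^ 2) :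
    (m' * X - m * X') / X ^ 2 / (s + m / X) ≤ (1 + e) * X := by
  rw [div_le_iff₀ (by positivity), div_le_iff₀ (by positivity)]
  have hexpand : (1 + e) * X * (s + m / X) * X ^ 2 =
      (2 * m * X + s * X ^ 2) * X - m * ((1 - e) * X ^ 2) + e * s * X ^ 3 := by field_simp; ring
  have hrest : 0 ≤ e * s * X ^ 3 := by positivity
  linarith [mul_le_mul_of_nonneg_right hm' hX.le, mul_le_mul_of_nonneg_left hX' hm]

lemma le_quotient_deriv_div (hX : 0 < X) (hm : 0 ≤ m) (hs : 0 < s) (hh : 0 ≤ h) (hh₂ : 0 ≤ h₂)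
    (he : h + h₂ / (s + m / X) ≤ e) (hX' : X' ≤ X ^ 2)
    (hm' : 2 * m * X * (1 - h) + (s - h₂) * X ^ 2 ≤ m') :
    (1 - 2 * e) * X ≤ (m' * X - m * X') / X ^ 2 / (s + m / X) := by
  set Q := s + m / X with hQ
  have hQ0 : 0 < Q := by positivity
  have hm_eq : m = (Q - s) * X := by rw [hQ]; field_simp; ring
  have hhe : h ≤ e := by linarith [div_nonneg hh₂ hQ0.le]
  have hh₂e : h₂ ≤ (e - h) * Q := (div_le_iff₀ hQ0).1 (by linarith)
  rw [le_div_iff₀ hQ0, le_div_iff₀ (by positivity)]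
  have hexpand : (2 * m * X * (1 - h) + (s - h₂) * X ^ 2) * X - m * X ^ 2 =
      (1 - 2 * h) * Q * X ^ 3 + 2 * h * s * X ^ 3 - h₂ * X ^ 3 := by rw [hm_eq]; ring
  have hrest : 0 ≤ 2 * h * s * X ^ 3 := by positivity
  have hgap : 0 ≤ (e - h) * (Q * X ^ 3) := mul_nonneg (by linarith) (by positivity)
  linarith [mul_le_mul_of_nonneg_right hm' hX.le, mul_le_mul_of_nonneg_left hX' hm,
    mul_le_mul_of_nonneg_right hh₂e (by positivity : 0 ≤ X ^ 3)]

end QuotientDerivative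

lemma le_one_sub_of_mul_one_sub_le {Z e r u : ℝ} (he : e < 1) (hZ : Z * (1 - e) ≤ 1 - r)
    (hru : 1 - r ≤ (1 - u) * (1 - e)) : Z ≤ 1 - u :=
  le_of_mul_le_mul_right (hZ.trans hru) (sub_pos.2 he)

/-! ### Extended nonnegative reals -/

lemma one_sub_ofReal {x : ℝ} (hx : 0 ≤ x) : 1 - ENNReal.ofReal x = ENNReal.ofReal (1 - x) := by
  rw [ENNReal.ofReal_sub _ hx, ENNReal.ofReal_one]

lemma ofReal_div_ofNat (x : ℝ) (n : ℕ) [n.AtLeastTwo] :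
    ENNReal.ofReal x / ofNat(n) = ENNReal.ofReal (x / ofNat(n)) := by
  rw [ENNReal.ofReal_div_of_pos Nat.ofNat_pos, ENNReal.ofReal_ofNat]

namespace Model

variable {d : ℕ} {c₀ : ℝ} (M : Model d c₀) {s t : ℝ}

/-! ### The two-point function below criticality -/

/-- The parameters `0 ≤ t < β_c`, at which the two-point function decays exponentially. -/
def subcritical : Set ℝ := {t | 0 ≤ t ∧ ENNReal.ofReal t < M.βc}

/-- The two-point function as a real function; a junk value `0` replaces `∞`, which can only occur
at criticality. -/
def realG (t : ℝ) (x : Fin d → ℤ) : ℝ := (M.G t x).toReal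

/-- The susceptibility `χ(t)` as a real number. -/
def susceptibility (t : ℝ) : ℝ := ∑' x, M.realG t x

/-- The squared correlation length `ξ(t)²` as a real number, in the form it takes once the second
moment of `J * G` is split into those of `J` and `G`. -/
def corrLenSq (t : ℝ) : ℝ := secondMoment M.K.J + secondMoment (M.realG t) / M.susceptibility t

/-- The quantity whose supremum over `[0, β]` is the error `E(β)`. -/
def localError (t : ℝ) : ℝ := ∑' x, M.H t x + secondMoment (M.H t) / M.corrLenSq t

variable {M}

lemma mem_subcritical_of_le (ht : t ∈ M.subcritical) (hs : 0 ≤ s) (hst : s ≤ t) :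
    s ∈ M.subcritical :=
  ⟨hs, (ENNReal.ofReal_le_ofReal hst).trans_lt ht.2⟩

variable (M) in
lemma realG_nonneg (t : ℝ) (x : Fin d → ℤ) : 0 ≤ M.realG t x := ENNReal.toReal_nonneg

lemma ofReal_realG (ht : t ∈ M.subcritical) (x : Fin d → ℤ) :
    ENNReal.ofReal (M.realG t x) = M.G t x := by
  obtain ⟨C, -, c, -, hC⟩ := M.expDecay ht.1 ht.2
  exact ENNReal.ofReal_toReal (ne_top_of_le_ne_top ENNReal.ofReal_ne_top (hC x))

lemma realG_mono (ht : t ∈ M.subcritical) (hs : 0 ≤ s) (hst : s ≤ t) (x : Fin d → ℤ) :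
    M.realG s x ≤ M.realG t x := by
  refine (ENNReal.ofReal_le_ofReal_iff (M.realG_nonneg t x)).1 ?_
  rw [ofReal_realG ht, ofReal_realG (mem_subcritical_of_le ht hs hst)]
  exact M.mono x hs hst ht.2.le

end Model

lemma IsSymmFun.even {d : ℕ} {α : Type*} {f : (Fin d → ℤ) → α} (hf : IsSymmFun f) :
    Function.Even f := by
  intro x
  rw [← hf 1 (fun _ => true) x]
  congr 1
  ext i
  simp

lemma AdmissibleKernel.hasSecondMoment {d : ℕ} {c₀ : ℝ} (K : AdmissibleKernel d c₀) :
    HasSecondMoment K.J :=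
  ⟨K.summable, K.summable_sq⟩

lemma AdmissibleKernel.secondMoment_pos {d : ℕ} {c₀ : ℝ} (K : AdmissibleKernel d c₀) :
    0 < secondMoment K.J := by
  obtain ⟨x, hJx, -⟩ := K.range_attained
  have hx : x ≠ 0 := by
    rintro rfl
    exact hJx.ne' K.zero_at_zero
  exact K.summable_sq.tsum_pos (fun y => mul_nonneg (sqNorm_nonneg y) (K.nonneg y)) x
    (mul_pos (sqNorm_pos hx) hJx)

namespace Model

variable {d : ℕ} {c₀ : ℝ} {M : Model d c₀} {a b e s t : ℝ}

variable (M) in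
lemma realG_even (t : ℝ) : Function.Even (M.realG t) := fun x =>
  congrArg ENNReal.toReal ((M.symm t).even x)

lemma hasSecondMoment_realG (ht : t ∈ M.subcritical) : HasSecondMoment (M.realG t) := by
  obtain ⟨C, hC, c, hc, hGC⟩ := M.expDecay ht.1 ht.2
  have hdecay : HasExpDecay (M.realG t) :=
    ⟨C, hC, c, hc, fun x => ENNReal.toReal_le_of_le_ofReal (by positivity) (hGC x)⟩
  exact hdecay.hasSecondMoment (M.realG_nonneg t)

lemma hasSecondMoment_H (ht : t ∈ M.subcritical) : HasSecondMoment (M.H t) :=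
  HasExpDecay.hasSecondMoment (M.H_expDecay ht.1 ht.2) (M.H_nonneg t)

lemma susceptibility_pos (ht : t ∈ M.subcritical) : 0 < M.susceptibility t := by
  have hzero : 0 < M.realG 0 0 := by simp [realG, M.init]
  exact (hasSecondMoment_realG ht).summable.tsum_pos (M.realG_nonneg t) 0
    (hzero.trans_le (realG_mono ht le_rfl ht.1 0))

lemma susceptibility_mono (ht : t ∈ M.subcritical) (hs : 0 ≤ s) (hst : s ≤ t) :
    M.susceptibility s ≤ M.susceptibility t :=
  (hasSecondMoment_realG (mem_subcritical_of_le ht hs hst)).summable.tsum_le_tsum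
    (realG_mono ht hs hst) (hasSecondMoment_realG ht).summable

lemma corrLenSq_pos (ht : t ∈ M.subcritical) : 0 < M.corrLenSq t :=
  add_pos_of_pos_of_nonneg M.K.secondMoment_pos
    (div_nonneg (secondMoment_nonneg (M.realG_nonneg t)) (susceptibility_pos ht).le)

lemma chi_eq_ofReal (ht : t ∈ M.subcritical) :
    M.chi t = ENNReal.ofReal (M.susceptibility t) := by
  rw [susceptibility, ENNReal.ofReal_tsum_of_nonneg (M.realG_nonneg t)
    (hasSecondMoment_realG ht).summable]
  exact tsum_congr fun x => (ofReal_realG ht x).symm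

lemma F_eq_ofReal (ht : t ∈ M.subcritical) (x : Fin d → ℤ) :
    M.F t x = ENNReal.ofReal (conv M.K.J (M.realG t) x) := by
  simp only [F, ofReal_conv M.K.summable (hasSecondMoment_realG ht).summable M.K.nonneg
    (M.realG_nonneg t), ofReal_realG ht]

lemma xiSq_eq_ofReal (ht : t ∈ M.subcritical) : M.xiSq t = ENNReal.ofReal (M.corrLenSq t) := by
  have hX := susceptibility_pos ht
  have hF0 (x : Fin d → ℤ) : 0 ≤ sqNorm x * conv M.K.J (M.realG t) x :=
    mul_nonneg (sqNorm_nonneg x) (conv_nonneg M.K.nonneg (M.realG_nonneg t) x)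
  have hF := hasSum_sqNorm_mul_conv M.K.hasSecondMoment (hasSecondMoment_realG ht) (M.realG_even t)
  have hnum : ∑' x, ENNReal.ofReal (sqNorm x) * M.F t x = ENNReal.ofReal
      (secondMoment M.K.J * M.susceptibility t + 1 * secondMoment (M.realG t)) := by
    rw [susceptibility, ← M.K.norm_one, ← hF.tsum_eq,
      ENNReal.ofReal_tsum_of_nonneg hF0 hF.summable]
    exact tsum_congr fun x => by rw [F_eq_ofReal ht, ENNReal.ofReal_mul (sqNorm_nonneg x)]
  rw [xiSq, hnum, chi_eq_ofReal ht, ← ENNReal.ofReal_div_of_pos hX, corrLenSq]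
  congr 1
  field_simp

lemma xi_div_xi_sq (hs : s ∈ M.subcritical) (ht : t ∈ M.subcritical) :
    (M.xi s / M.xi t) ^ 2 = M.corrLenSq s / M.corrLenSq t := by
  have hsq {u : ℝ} (hu : u ∈ M.subcritical) : M.xi u ^ 2 = M.corrLenSq u := by
    rw [xi, xiSq_eq_ofReal hu, ENNReal.toReal_ofReal (corrLenSq_pos hu).le,
      Real.sq_sqrt (corrLenSq_pos hu).le]
  rw [div_pow, hsq hs, hsq ht]

lemma ofReal_localError (ht : t ∈ M.subcritical) :
    ENNReal.ofReal (M.localError t) = ENNReal.ofReal (∑' x, M.H t x) +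
      ENNReal.ofReal (∑' x, sqNorm x * M.H t x) / M.xiSq t := by
  have hQ := corrLenSq_pos ht
  rw [localError, ENNReal.ofReal_add (tsum_nonneg (M.H_nonneg t))
    (div_nonneg (secondMoment_nonneg (M.H_nonneg t)) hQ.le), ENNReal.ofReal_div_of_pos hQ,
    xiSq_eq_ofReal ht, secondMoment]

lemma localError_le_toReal_E (hb : b ∈ M.subcritical) (hE : M.E b ≠ ⊤) (ht : t ∈ Set.Icc 0 b) :
    M.localError t ≤ (M.E b).toReal := by
  refine (ENNReal.ofReal_le_iff_le_toReal hE).1 ?_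
  rw [ofReal_localError (mem_subcritical_of_le hb ht.1 ht.2), E]
  exact le_iSup₂_of_le t ht le_rfl

/-! ### Differentiating the susceptibility and the second moment -/

lemma realG_le_add (ht : t ∈ M.subcritical) (hs : 0 ≤ s) (hst : s ≤ t) (x : Fin d → ℤ) :
    M.realG t x ≤ M.realG s x + (t - s) * conv (M.realG s) (conv M.K.J (M.realG t)) x := by
  have hs' := mem_subcritical_of_le ht hs hst
  have hconv : 0 ≤ (t - s) * conv (M.realG s) (conv M.K.J (M.realG t)) x :=
    mul_nonneg (sub_nonneg.2 hst)
      (conv_nonneg (M.realG_nonneg s) (conv_nonneg M.K.nonneg (M.realG_nonneg t)) x)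
  refine ENNReal.toReal_le_of_le_ofReal (add_nonneg (M.realG_nonneg s x) hconv) ?_
  rw [ENNReal.ofReal_add (M.realG_nonneg s x) hconv, ENNReal.ofReal_mul (sub_nonneg.2 hst),
    ← tsum_ofReal_prod_eq_ofReal_conv_conv (hasSecondMoment_realG hs').summable M.K.summable
      (hasSecondMoment_realG ht).summable (M.realG_nonneg s) M.K.nonneg (M.realG_nonneg t)]
  simpa only [ofReal_realG hs', ofReal_realG ht] using M.I1 hs hst ht.2 x

lemma susceptibility_le_add (ht : t ∈ M.subcritical) (hs : 0 ≤ s) (hst : s ≤ t) :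
    M.susceptibility t ≤
      M.susceptibility s + (t - s) * (M.susceptibility s * M.susceptibility t) := by
  have hs' := hasSecondMoment_realG (mem_subcritical_of_le ht hs hst)
  have ht' := hasSecondMoment_realG ht
  have hJG := hasSum_conv M.K.summable ht'.summable
  have hsum := hs'.summable.hasSum.add ((hasSum_conv hs'.summable hJG.summable).mul_left (t - s))
  rw [hJG.tsum_eq, M.K.norm_one, one_mul] at hsum
  exact hasSum_le (realG_le_add ht hs hst) ht'.summable.hasSum hsum

variable (M) in
/-- The kernel `G_t * J * G_t` that dominates `∂_t G_t`. -/
def tripleConv (t : ℝ) : (Fin d → ℤ) → ℝ := conv (M.realG t) (conv M.K.J (M.realG t))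

lemma hasSecondMoment_tripleConv (ht : t ∈ M.subcritical) : HasSecondMoment (M.tripleConv t) :=
  (hasSecondMoment_realG ht).conv_conv_self M.K.hasSecondMoment (M.realG_even t) M.K.symm.even

lemma conv_conv_le_tripleConv (hb : b ∈ M.subcritical) (hs : s ∈ Set.Icc 0 b)
    (ht : t ∈ Set.Icc 0 b) (x : Fin d → ℤ) :
    conv (M.realG s) (conv M.K.J (M.realG t)) x ≤ M.tripleConv b x := by
  have hs' := (hasSecondMoment_realG (mem_subcritical_of_le hb hs.1 hs.2)).summable
  have ht' := (hasSecondMoment_realG (mem_subcritical_of_le hb ht.1 ht.2)).summable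
  have hb' := (hasSecondMoment_realG hb).summable
  refine conv_le_conv hs' (hasSum_conv M.K.summable ht').summable hb'
    (hasSum_conv M.K.summable hb').summable (M.realG_nonneg s)
    (conv_nonneg M.K.nonneg (M.realG_nonneg t)) (realG_mono hb hs.1 hs.2) (fun y => ?_) x
  exact conv_le_conv M.K.summable ht' M.K.summable hb' M.K.nonneg (M.realG_nonneg t)
    (fun _ => le_rfl) (realG_mono hb ht.1 ht.2) y

lemma hasDerivAt_realG (ht : t ∈ M.subcritical) (ht0 : 0 < t) (x : Fin d → ℤ) :
    HasDerivAt (fun s => M.realG s x) (M.G' t x) t :=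
  (M.deriv x ht.1 ht.2).hasDerivAt (Ici_mem_nhds ht0)

-- Slopes from the left suffice, and for `s < t` the bound `G_s * J * G_t` of (I.1) is at most
-- `G_t * J * G_t`, so no limit of convolutions has to be taken.
lemma tendsto_slope_realG (ht : t ∈ M.subcritical) (ht0 : 0 < t) (x : Fin d → ℤ) :
    Filter.Tendsto (fun s => slope (fun s => M.realG s x) s t) (nhdsWithin t (Set.Iio t))
      (nhds (M.G' t x)) := by
  simp only [slope_comm _ _ t]
  exact (hasDerivAt_iff_tendsto_slope.1 (hasDerivAt_realG ht ht0 x)).mono_left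
    (nhdsWithin_mono t fun s (hs : s < t) => hs.ne)

lemma G'_nonneg (ht : t ∈ M.subcritical) (ht0 : 0 < t) (x : Fin d → ℤ) : 0 ≤ M.G' t x := by
  refine ge_of_tendsto (tendsto_slope_realG ht ht0 x) ?_
  filter_upwards [Ioo_mem_nhdsLT ht0] with s hs
  rw [slope_def_field]
  exact div_nonneg (sub_nonneg.2 (realG_mono ht hs.1.le hs.2.le x)) (sub_nonneg.2 hs.2.le)

lemma G'_le_tripleConv (ht : t ∈ M.subcritical) (ht0 : 0 < t) (x : Fin d → ℤ) :
    M.G' t x ≤ M.tripleConv t x := by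
  refine le_of_tendsto (tendsto_slope_realG ht ht0 x) ?_
  filter_upwards [Ioo_mem_nhdsLT ht0] with s hs
  have hstep := realG_le_add ht hs.1.le hs.2.le x
  have hconv := mul_le_mul_of_nonneg_left
    (conv_conv_le_tripleConv ht ⟨hs.1.le, hs.2.le⟩ ⟨ht.1, le_rfl⟩ x) (sub_nonneg.2 hs.2.le)
  rw [slope_def_field, div_le_iff₀ (sub_pos.2 hs.2)]
  linarith

lemma conv_conv_sub_H_le_G' (ht : t ∈ M.subcritical) (x : Fin d → ℤ) :
    conv (M.realG t) (conv (fun y => M.K.J y - M.H t y) (M.realG t)) x ≤ M.G' t x := by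
  have hG := (hasSecondMoment_realG ht).summable
  rw [← tsum_prod_eq_conv_conv hG (M.K.summable.sub (hasSecondMoment_H ht).summable) hG]
  exact M.I2 ht.1 ht.2 x

lemma hasSecondMoment_G' (ht : t ∈ M.subcritical) (ht0 : 0 < t) : HasSecondMoment (M.G' t) :=
  (hasSecondMoment_tripleConv ht).of_nonneg_of_le (G'_nonneg ht ht0) (G'_le_tripleConv ht ht0)

lemma hasDerivAt_tsum_mul_realG (hb : b ∈ M.subcritical) (ht : t ∈ Set.Ioo 0 b)
    {φ : (Fin d → ℤ) → ℝ} (hφ : ∀ x, 0 ≤ φ x) (hφG : Summable fun x => φ x * M.realG t x)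
    (hφC : Summable fun x => φ x * M.tripleConv b x) :
    HasDerivAt (fun s => ∑' x, φ x * M.realG s x) (∑' x, φ x * M.G' t x) t := by
  have hsub {s : ℝ} (hs : s ∈ Set.Ioo 0 b) := mem_subcritical_of_le hb hs.1.le hs.2.le
  refine hasDerivAt_tsum_of_isPreconnected hφC isOpen_Ioo isPreconnected_Ioo
    (fun x s hs => (hasDerivAt_realG (hsub hs) hs.1 x).const_mul (φ x)) (fun x s hs => ?_) ht hφG ht
  have hmono := conv_conv_le_tripleConv hb ⟨hs.1.le, hs.2.le⟩ ⟨hs.1.le, hs.2.le⟩ x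
  rw [Real.norm_of_nonneg (mul_nonneg (hφ x) (G'_nonneg (hsub hs) hs.1 x))]
  exact mul_le_mul_of_nonneg_left ((G'_le_tripleConv (hsub hs) hs.1 x).trans hmono) (hφ x)

lemma hasDerivAt_susceptibility (hb : b ∈ M.subcritical) (ht : t ∈ Set.Ioo 0 b) :
    HasDerivAt M.susceptibility (∑' x, M.G' t x) t := by
  have hG := (hasSecondMoment_realG (mem_subcritical_of_le hb ht.1.le ht.2.le)).summable
  have hC := (hasSecondMoment_tripleConv hb).summable
  simpa using! hasDerivAt_tsum_mul_realG hb ht (φ := fun _ => 1)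
    (fun _ => zero_le_one) (by simpa using hG) (by simpa using hC)

lemma hasDerivAt_secondMoment_realG (hb : b ∈ M.subcritical) (ht : t ∈ Set.Ioo 0 b) :
    HasDerivAt (fun s => secondMoment (M.realG s)) (secondMoment (M.G' t)) t :=
  hasDerivAt_tsum_mul_realG hb ht sqNorm_nonneg
    (hasSecondMoment_realG (mem_subcritical_of_le hb ht.1.le ht.2.le)).summable_sqNorm_mul
    (hasSecondMoment_tripleConv hb).summable_sqNorm_mul

lemma continuousOn_tsum_mul_realG (hb : b ∈ M.subcritical) {φ : (Fin d → ℤ) → ℝ}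
    (hφ : ∀ x, 0 ≤ φ x) (hφG : Summable fun x => φ x * M.realG b x) :
    ContinuousOn (fun s => ∑' x, φ x * M.realG s x) (Set.Icc 0 b) := by
  refine continuousOn_tsum (fun x t ht => ?_) hφG (fun x t ht => ?_)
  · have ht' := mem_subcritical_of_le hb ht.1 ht.2
    exact (continuousWithinAt_const.mul (M.deriv x ht'.1 ht'.2).continuousWithinAt).mono
      fun s hs => hs.1
  · rw [Real.norm_of_nonneg (mul_nonneg (hφ x) (M.realG_nonneg t x))]
    exact mul_le_mul_of_nonneg_left (realG_mono hb ht.1 ht.2 x) (hφ x)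

lemma continuousOn_susceptibility (hb : b ∈ M.subcritical) :
    ContinuousOn M.susceptibility (Set.Icc 0 b) := by
  simpa using! continuousOn_tsum_mul_realG hb
    (φ := fun _ => 1) (fun _ => zero_le_one) (by simpa using (hasSecondMoment_realG hb).summable)

lemma continuousOn_corrLenSq (hb : b ∈ M.subcritical) :
    ContinuousOn M.corrLenSq (Set.Icc 0 b) :=
  continuousOn_const.add <|
    (continuousOn_tsum_mul_realG hb sqNorm_nonneg
      (hasSecondMoment_realG hb).summable_sqNorm_mul).div (continuousOn_susceptibility hb)
      fun _ ht => (susceptibility_pos (mem_subcritical_of_le hb ht.1 ht.2)).ne'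

lemma hasDerivAt_corrLenSq (hb : b ∈ M.subcritical) (ht : t ∈ Set.Ioo 0 b) :
    HasDerivAt M.corrLenSq
      ((secondMoment (M.G' t) * M.susceptibility t -
        secondMoment (M.realG t) * ∑' x, M.G' t x) / M.susceptibility t ^ 2) t :=
  ((hasDerivAt_secondMoment_realG hb ht).div (hasDerivAt_susceptibility hb ht)
    (susceptibility_pos (mem_subcritical_of_le hb ht.1.le ht.2.le)).ne').const_add _

/-! ### Differential inequalities for the susceptibility and the correlation length -/

lemma tsum_G'_le (ht : t ∈ M.subcritical) (ht0 : 0 < t) :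
    ∑' x, M.G' t x ≤ M.susceptibility t ^ 2 := by
  have hmass := hasSum_conv_conv_self (hasSecondMoment_realG ht).summable M.K.summable
  rw [M.K.norm_one, one_mul] at hmass
  exact hasSum_le (G'_le_tripleConv ht ht0) (hasSecondMoment_G' ht ht0).summable.hasSum hmass

lemma secondMoment_G'_le (ht : t ∈ M.subcritical) (ht0 : 0 < t) :
    secondMoment (M.G' t) ≤ 2 * secondMoment (M.realG t) * M.susceptibility t +
      secondMoment M.K.J * M.susceptibility t ^ 2 := by
  have hmoment := hasSum_sqNorm_mul_conv_conv_self (hasSecondMoment_realG ht)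
    M.K.hasSecondMoment (M.realG_even t) M.K.symm.even
  rw [M.K.norm_one, mul_one] at hmoment
  exact ((hasSecondMoment_G' ht ht0).secondMoment_le_secondMoment
    (hasSecondMoment_tripleConv ht) (G'_le_tripleConv ht ht0)).trans_eq hmoment.tsum_eq

lemma tsum_J_sub_H (ht : t ∈ M.subcritical) :
    ∑' x, (M.K.J x - M.H t x) = 1 - ∑' x, M.H t x := by
  rw [M.K.summable.tsum_sub (hasSecondMoment_H ht).summable, M.K.norm_one]

lemma le_tsum_G' (ht : t ∈ M.subcritical) (ht0 : 0 < t) :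
    (1 - ∑' x, M.H t x) * M.susceptibility t ^ 2 ≤ ∑' x, M.G' t x := by
  have hmass := hasSum_conv_conv_self (hasSecondMoment_realG ht).summable
    (M.K.summable.sub (hasSecondMoment_H ht).summable)
  rw [tsum_J_sub_H ht] at hmass
  exact hasSum_le (conv_conv_sub_H_le_G' ht) hmass (hasSecondMoment_G' ht ht0).summable.hasSum

lemma le_secondMoment_G' (ht : t ∈ M.subcritical) (ht0 : 0 < t) :
    2 * secondMoment (M.realG t) * M.susceptibility t * (1 - ∑' x, M.H t x) +
      (secondMoment M.K.J - secondMoment (M.H t)) * M.susceptibility t ^ 2 ≤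
      secondMoment (M.G' t) := by
  have hG := hasSecondMoment_realG ht
  have hJH := M.K.hasSecondMoment.sub (hasSecondMoment_H ht)
  have hJH_even : Function.Even fun x => M.K.J x - M.H t x := fun x => by
    simp only [M.K.symm.even x, M.H_symm]
  have hmoment := hasSum_sqNorm_mul_conv_conv_self hG hJH (M.realG_even t) hJH_even
  rw [tsum_J_sub_H ht, M.K.hasSecondMoment.secondMoment_sub (hasSecondMoment_H ht)] at hmoment
  exact hmoment.tsum_eq.symm.trans_le <|
    (hG.conv_conv_self hJH (M.realG_even t) hJH_even).secondMoment_le_secondMoment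
      (hasSecondMoment_G' ht ht0) (conv_conv_sub_H_le_G' ht)

lemma one_sub_mul_sq_le_tsum_G' (ht : t ∈ M.subcritical) (ht0 : 0 < t) (he : M.localError t ≤ e) :
    (1 - e) * M.susceptibility t ^ 2 ≤ ∑' x, M.G' t x := by
  have hHe : ∑' x, M.H t x ≤ e := le_of_add_le_of_nonneg_left he
    (div_nonneg (secondMoment_nonneg (M.H_nonneg t)) (corrLenSq_pos ht).le)
  exact (mul_le_mul_of_nonneg_right (by linarith) (sq_nonneg _)).trans (le_tsum_G' ht ht0)

lemma one_sub_susceptibility_div_le (hb : b ∈ M.subcritical) (ha : 0 ≤ a) (hab : a ≤ b) :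
    1 - M.susceptibility a / M.susceptibility b ≤ (b - a) * M.susceptibility a := by
  have hXb := susceptibility_pos hb
  rw [one_sub_div hXb.ne', div_le_iff₀ hXb]
  linarith [susceptibility_le_add hb ha hab]

lemma mul_susceptibility_mul_one_sub_le (hb : b ∈ M.subcritical) (ha : 0 ≤ a) (hab : a ≤ b)
    (he : ∀ t ∈ Set.Icc 0 b, M.localError t ≤ e) :
    (b - a) * M.susceptibility a * (1 - e) ≤ 1 - M.susceptibility a / M.susceptibility b := by
  have hXa := susceptibility_pos (mem_subcritical_of_le hb ha hab)
  have hsub {t : ℝ} (ht : t ∈ Set.Icc a b) : t ∈ Set.Icc 0 b := Set.Icc_subset_Icc_left ha ht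
  have hriccati : (1 - e) * (b - a) ≤ (M.susceptibility a)⁻¹ - (M.susceptibility b)⁻¹ :=
    mul_sub_le_inv_sub_inv hab
      (fun t ht => susceptibility_pos (mem_subcritical_of_le hb (hsub ht).1 ht.2))
      ((continuousOn_susceptibility hb).mono (Set.Icc_subset_Icc_left ha))
      (fun t ht => hasDerivAt_susceptibility hb (Set.Ioo_subset_Ioo_left ha ht))
      (fun t ht => one_sub_mul_sq_le_tsum_G'
        (mem_subcritical_of_le hb (ha.trans ht.1.le) ht.2.le) (ha.trans_lt ht.1)
        (he t (hsub (Set.Ioo_subset_Icc_self ht))))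
  calc (b - a) * M.susceptibility a * (1 - e)
      = M.susceptibility a * ((1 - e) * (b - a)) := by ring
    _ ≤ M.susceptibility a * ((M.susceptibility a)⁻¹ - (M.susceptibility b)⁻¹) := by gcongr
    _ = 1 - M.susceptibility a / M.susceptibility b := by
      rw [mul_sub, mul_inv_cancel₀ hXa.ne', div_eq_mul_inv]

lemma corrLenSq_deriv_div_le (hb : b ∈ M.subcritical) (ht : t ∈ Set.Ioo 0 b) (he0 : 0 ≤ e)
    (he : M.localError t ≤ e) :
    _root_.deriv M.corrLenSq t / M.corrLenSq t ≤ (1 + e) * M.susceptibility t := by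
  have ht' := mem_subcritical_of_le hb ht.1.le ht.2.le
  rw [(hasDerivAt_corrLenSq hb ht).deriv]
  exact quotient_deriv_div_le (susceptibility_pos ht') (secondMoment_nonneg (M.realG_nonneg t))
    M.K.secondMoment_pos he0 (one_sub_mul_sq_le_tsum_G' ht' ht.1 he) (secondMoment_G'_le ht' ht.1)

lemma le_corrLenSq_deriv_div (hb : b ∈ M.subcritical) (ht : t ∈ Set.Ioo 0 b)
    (he : M.localError t ≤ e) :
    (1 - 2 * e) * M.susceptibility t ≤ _root_.deriv M.corrLenSq t / M.corrLenSq t := by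
  have ht' := mem_subcritical_of_le hb ht.1.le ht.2.le
  rw [(hasDerivAt_corrLenSq hb ht).deriv]
  exact le_quotient_deriv_div (susceptibility_pos ht') (secondMoment_nonneg (M.realG_nonneg t))
    M.K.secondMoment_pos (tsum_nonneg (M.H_nonneg t)) (secondMoment_nonneg (M.H_nonneg t)) he
    (tsum_G'_le ht' ht.1) (le_secondMoment_G' ht' ht.1)

lemma one_add_mul_log_susceptibility_div_le (hb : b ∈ M.subcritical) (ha : 0 ≤ a) (hab : a ≤ b)
    (he0 : 0 ≤ e) (he1 : e ≤ 1) (he : ∀ t ∈ Set.Icc 0 b, M.localError t ≤ e) :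
    (1 + e) * Real.log (M.susceptibility a / M.susceptibility b) ≤
      (1 - e) * Real.log (M.corrLenSq a / M.corrLenSq b) := by
  have hsub {t : ℝ} (ht : t ∈ Set.Icc a b) : t ∈ M.subcritical :=
    mem_subcritical_of_le hb (ha.trans ht.1) ht.2
  have hIoo {t : ℝ} (ht : t ∈ Set.Ioo a b) : t ∈ Set.Ioo 0 b := Set.Ioo_subset_Ioo_left ha ht
  have hIcc : Set.Icc a b ⊆ Set.Icc 0 b := Set.Icc_subset_Icc_left ha
  refine mul_log_div_le_mul_log_div hab
    (fun t ht => corrLenSq_pos (hsub ht)) ((continuousOn_corrLenSq hb).mono hIcc)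
    (fun t ht => (hasDerivAt_corrLenSq hb (hIoo ht)).differentiableAt.hasDerivAt)
    (fun t ht => susceptibility_pos (hsub ht)) ((continuousOn_susceptibility hb).mono hIcc)
    (fun t ht => hasDerivAt_susceptibility hb (hIoo ht)) fun t ht => ?_
  have ht' := Set.Ioo_subset_Icc_self ht
  have hX := susceptibility_pos (hsub ht')
  have hXderiv : (1 - e) * M.susceptibility t ≤ (∑' x, M.G' t x) / M.susceptibility t := by
    rw [le_div_iff₀ hX]
    linarith [one_sub_mul_sq_le_tsum_G' (hsub ht') (hIoo ht).1 (he t (hIcc ht'))]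
  calc (1 - e) * (_root_.deriv M.corrLenSq t / M.corrLenSq t)
      ≤ (1 - e) * ((1 + e) * M.susceptibility t) :=
        mul_le_mul_of_nonneg_left
          (corrLenSq_deriv_div_le hb (hIoo ht) he0 (he t (hIcc ht'))) (by linarith)
    _ = (1 + e) * ((1 - e) * M.susceptibility t) := by ring
    _ ≤ (1 + e) * ((∑' x, M.G' t x) / M.susceptibility t) := by gcongr

lemma log_corrLenSq_div_le (hb : b ∈ M.subcritical) (ha : 0 ≤ a) (hab : a ≤ b) (he1 : e ≤ 1 / 2)
    (he : ∀ t ∈ Set.Icc 0 b, M.localError t ≤ e) :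
    Real.log (M.corrLenSq a / M.corrLenSq b) ≤
      (1 - 2 * e) * Real.log (M.susceptibility a / M.susceptibility b) := by
  have hsub {t : ℝ} (ht : t ∈ Set.Icc a b) : t ∈ M.subcritical :=
    mem_subcritical_of_le hb (ha.trans ht.1) ht.2
  have hIoo {t : ℝ} (ht : t ∈ Set.Ioo a b) : t ∈ Set.Ioo 0 b := Set.Ioo_subset_Ioo_left ha ht
  have hIcc : Set.Icc a b ⊆ Set.Icc 0 b := Set.Icc_subset_Icc_left ha
  rw [← one_mul (Real.log (M.corrLenSq a / _))]
  refine mul_log_div_le_mul_log_div hab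
    (fun t ht => susceptibility_pos (hsub ht)) ((continuousOn_susceptibility hb).mono hIcc)
    (fun t ht => hasDerivAt_susceptibility hb (hIoo ht))
    (fun t ht => corrLenSq_pos (hsub ht)) ((continuousOn_corrLenSq hb).mono hIcc)
    (fun t ht => (hasDerivAt_corrLenSq hb (hIoo ht)).differentiableAt.hasDerivAt) fun t ht => ?_
  have ht' := Set.Ioo_subset_Icc_self ht
  have hXderiv : (∑' x, M.G' t x) / M.susceptibility t ≤ M.susceptibility t := by
    rw [div_le_iff₀ (susceptibility_pos (hsub ht')), ← sq]
    exact tsum_G'_le (hsub ht') (hIoo ht).1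
  calc (1 - 2 * e) * ((∑' x, M.G' t x) / M.susceptibility t)
      ≤ (1 - 2 * e) * M.susceptibility t := mul_le_mul_of_nonneg_left hXderiv (by linarith)
    _ ≤ _root_.deriv M.corrLenSq t / M.corrLenSq t :=
        le_corrLenSq_deriv_div hb (hIoo ht) (he t (hIcc ht'))
    _ = 1 * (_root_.deriv M.corrLenSq t / M.corrLenSq t) := (one_mul _).symm

/-! ### The bounds on `Z` -/

lemma ofReal_mul_chi (hb : b ∈ M.subcritical) (ha : 0 ≤ a) (hab : a ≤ b) :
    ENNReal.ofReal (b - a) * M.chi a = ENNReal.ofReal ((b - a) * M.susceptibility a) := by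
  rw [chi_eq_ofReal (mem_subcritical_of_le hb ha hab), ENNReal.ofReal_mul (sub_nonneg.2 hab)]

lemma chi_div_chi (hb : b ∈ M.subcritical) (ha : a ∈ M.subcritical) :
    M.chi a / M.chi b = ENNReal.ofReal (M.susceptibility a / M.susceptibility b) := by
  rw [chi_eq_ofReal ha, chi_eq_ofReal hb, ENNReal.ofReal_div_of_pos (susceptibility_pos hb)]

lemma one_sub_chi_div_le (hb : b ∈ M.subcritical) (ha : 0 ≤ a) (hab : a ≤ b) :
    1 - M.chi a / M.chi b ≤ ENNReal.ofReal (b - a) * M.chi a := by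
  have ha' := mem_subcritical_of_le hb ha hab
  rw [ofReal_mul_chi hb ha hab, chi_div_chi hb ha',
    one_sub_ofReal (div_pos (susceptibility_pos ha') (susceptibility_pos hb)).le]
  exact ENNReal.ofReal_le_ofReal (one_sub_susceptibility_div_le hb ha hab)

lemma ofReal_mul_chi_le_div (hb : b ∈ M.subcritical) (ha : 0 ≤ a) (hab : a ≤ b) (hE : M.E b < 1) :
    ENNReal.ofReal (b - a) * M.chi a ≤ (1 - M.chi a / M.chi b) / (1 - M.E b) := by
  have ha' := mem_subcritical_of_le hb ha hab
  have hEtop : M.E b ≠ ⊤ := hE.ne_top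
  have he1 : 0 < 1 - (M.E b).toReal := by
    rw [sub_pos, ← ENNReal.toReal_one]
    exact (ENNReal.toReal_lt_toReal hEtop ENNReal.one_ne_top).2 hE
  rw [ofReal_mul_chi hb ha hab, chi_div_chi hb ha', ← ENNReal.ofReal_toReal hEtop,
    one_sub_ofReal (div_pos (susceptibility_pos ha') (susceptibility_pos hb)).le,
    one_sub_ofReal ENNReal.toReal_nonneg, ← ENNReal.ofReal_div_of_pos he1]
  refine ENNReal.ofReal_le_ofReal ((le_div_iff₀ he1).2 ?_)
  exact mul_susceptibility_mul_one_sub_le hb ha hab fun t => localError_le_toReal_E hb hEtop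

lemma ofReal_mul_chi_le_one_sub_half (hb : b ∈ M.subcritical) (ha : 0 ≤ a) (hab : a ≤ b)
    (hE : M.E b ≤ M.chi a / M.chi b / 4) :
    ENNReal.ofReal (b - a) * M.chi a ≤ 1 - M.chi a / M.chi b / 2 := by
  have ha' := mem_subcritical_of_le hb ha hab
  have hXb := susceptibility_pos hb
  have hr0 := div_pos (susceptibility_pos ha') hXb
  have hr1 := (div_le_one hXb).2 (susceptibility_mono hb ha hab)
  rw [chi_div_chi hb ha'] at hE ⊢
  set r := M.susceptibility a / M.susceptibility b
  rw [ofReal_div_ofNat] at hE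
  have hEtop : M.E b ≠ ⊤ := ne_top_of_le_ne_top ENNReal.ofReal_ne_top hE
  have he : (M.E b).toReal ≤ r / 4 := ENNReal.toReal_le_of_le_ofReal (by positivity) hE
  rw [ofReal_mul_chi hb ha hab, ofReal_div_ofNat,
    one_sub_ofReal (by positivity)]
  refine ENNReal.ofReal_le_ofReal (le_one_sub_of_mul_one_sub_le (by linarith)
    (mul_susceptibility_mul_one_sub_le hb ha hab fun t => localError_le_toReal_E hb hEtop) ?_)
  nlinarith

lemma susceptibility_div_bounds (hb : b ∈ M.subcritical) (ha : 0 ≤ a) (hab : a ≤ b) {e : ℝ}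
    (he0 : 0 ≤ e) (he : ∀ t ∈ Set.Icc 0 b, M.localError t ≤ e)
    (he8 : e ≤ M.corrLenSq a / M.corrLenSq b / 8) (he2 : e ≤ 1 / 2) :
    M.susceptibility a / M.susceptibility b ≤ 2 * (M.corrLenSq a / M.corrLenSq b) ∧
      2 / 3 * (M.corrLenSq a / M.corrLenSq b) ≤ M.susceptibility a / M.susceptibility b := by
  have ha' := mem_subcritical_of_le hb ha hab
  have hXb := susceptibility_pos hb
  have hq := div_pos (corrLenSq_pos ha') (corrLenSq_pos hb)
  have hr := div_pos (susceptibility_pos ha') hXb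
  exact ⟨le_two_mul_of_log_le hq hr he0 he8
      (one_add_mul_log_susceptibility_div_le hb ha hab he0 (by linarith) he),
    two_thirds_mul_le_of_le_log hq hr ((div_le_one hXb).2 (susceptibility_mono hb ha hab)) he0 he8
      he2 (log_corrLenSq_div_le hb ha hab he2 he)⟩

lemma ofReal_mul_chi_bounds_of_E_le (hb : b ∈ M.subcritical) (ha : 0 ≤ a) (hab : a ≤ b)
    (hE : M.E b ≤ min (ENNReal.ofReal ((M.xi a / M.xi b) ^ 2) / 8) (1 / 2)) :
    1 - 2 * ENNReal.ofReal ((M.xi a / M.xi b) ^ 2) ≤ ENNReal.ofReal (b - a) * M.chi a ∧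
      ENNReal.ofReal (b - a) * M.chi a ≤ 1 - ENNReal.ofReal ((M.xi a / M.xi b) ^ 2) / 4 := by
  have ha' := mem_subcritical_of_le hb ha hab
  have hq := div_pos (corrLenSq_pos ha') (corrLenSq_pos hb)
  rw [xi_div_xi_sq ha' hb] at hE ⊢
  set q := M.corrLenSq a / M.corrLenSq b
  have hEtop : M.E b ≠ ⊤ := ne_top_of_le_ne_top (by finiteness) (hE.trans (min_le_right _ _))
  have he8 : (M.E b).toReal ≤ q / 8 := by
    rw [ofReal_div_ofNat] at hE
    exact ENNReal.toReal_le_of_le_ofReal (by positivity) (hE.trans (min_le_left _ _))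
  have he2 : (M.E b).toReal ≤ 1 / 2 := by
    simpa using ENNReal.toReal_mono (by finiteness) (hE.trans (min_le_right _ _))
  have hlocal : ∀ t ∈ Set.Icc 0 b, M.localError t ≤ (M.E b).toReal :=
    fun t => localError_le_toReal_E hb hEtop
  obtain ⟨hrq, hqr⟩ : M.susceptibility a / M.susceptibility b ≤ 2 * q ∧
      2 / 3 * q ≤ M.susceptibility a / M.susceptibility b :=
    susceptibility_div_bounds hb ha hab ENNReal.toReal_nonneg hlocal he8 he2
  have htwo : 2 * ENNReal.ofReal q = ENNReal.ofReal (2 * q) := by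
    rw [ENNReal.ofReal_mul zero_le_two, ENNReal.ofReal_ofNat]
  rw [ofReal_mul_chi hb ha hab, htwo, ofReal_div_ofNat,
    one_sub_ofReal (by positivity), one_sub_ofReal (by positivity)]
  refine ⟨ENNReal.ofReal_le_ofReal ?_, ENNReal.ofReal_le_ofReal ?_⟩
  · linarith [one_sub_susceptibility_div_le hb ha hab]
  · refine le_one_sub_of_mul_one_sub_le (by linarith)
      (mul_susceptibility_mul_one_sub_le hb ha hab hlocal) ?_
    nlinarith [mul_nonneg hq.le (M.E b).toReal_nonneg]

end Model

end Blackbox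

theorem statement15_general {d : ℕ} {c₀ : ℝ} (M : Model d c₀) {β' β : ℝ} (hβ'0 : 0 ≤ β')
    (hβ'β : β' ≤ β) (hβ : ENNReal.ofReal β < M.βc) :
    ((1 - M.chi β' / M.chi β ≤ ENNReal.ofReal (β - β') * M.chi β') ∧
      (M.E β < 1 → ENNReal.ofReal (β - β') * M.chi β' ≤
        (1 - M.chi β' / M.chi β) / (1 - M.E β))) ∧
    (M.E β ≤ M.chi β' / M.chi β / 4 →
      1 - M.chi β' / M.chi β ≤ ENNReal.ofReal (β - β') * M.chi β' ∧
      ENNReal.ofReal (β - β') * M.chi β' ≤ 1 - M.chi β' / M.chi β / 2) ∧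
    (M.E β ≤ min (ENNReal.ofReal ((M.xi β' / M.xi β) ^ 2) / 8) (1/2) →
      1 - 2 * ENNReal.ofReal ((M.xi β' / M.xi β) ^ 2) ≤
          ENNReal.ofReal (β - β') * M.chi β' ∧
      ENNReal.ofReal (β - β') * M.chi β' ≤
          1 - ENNReal.ofReal ((M.xi β' / M.xi β) ^ 2) / 4) := by
  have hb : β ∈ M.subcritical := ⟨hβ'0.trans hβ'β, hβ⟩
  have hlower := Model.one_sub_chi_div_le hb hβ'0 hβ'β
  refine ⟨⟨hlower, ?_⟩, ?_, ?_⟩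
  · exact fun hE => Model.ofReal_mul_chi_le_div hb hβ'0 hβ'β hE
  · exact fun hE => ⟨hlower, Model.ofReal_mul_chi_le_one_sub_half hb hβ'0 hβ'β hE⟩
  · exact fun hE => Model.ofReal_mul_chi_bounds_of_E_le hb hβ'0 hβ'β hE

/-- bounds on `Z_{β',β}` (`prop:Zbd`). -/
theorem statement15 (d : ℕ) (hd : 2 < d) (c₀ : ℝ) (hc₀ : c₀ ∈ Set.Ioc (0:ℝ) 1)
    (M : Model d c₀) (β' β : ℝ) (hβ'0 : 0 ≤ β') (hβ'β : β' ≤ β)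
    (hβ : ENNReal.ofReal β < M.βc) :
    ((1 - M.chi β' / M.chi β ≤ ENNReal.ofReal (β - β') * M.chi β') ∧
      (M.E β < 1 → ENNReal.ofReal (β - β') * M.chi β' ≤
        (1 - M.chi β' / M.chi β) / (1 - M.E β))) ∧
    (M.E β ≤ M.chi β' / M.chi β / 4 →
      1 - M.chi β' / M.chi β ≤ ENNReal.ofReal (β - β') * M.chi β' ∧
      ENNReal.ofReal (β - β') * M.chi β' ≤ 1 - M.chi β' / M.chi β / 2) ∧
    (M.E β ≤ min (ENNReal.ofReal ((M.xi β' / M.xi β) ^ 2) / 8) (1/2) →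
      1 - 2 * ENNReal.ofReal ((M.xi β' / M.xi β) ^ 2) ≤
          ENNReal.ofReal (β - β') * M.chi β' ∧
      ENNReal.ofReal (β - β') * M.chi β' ≤
          1 - ENNReal.ofReal ((M.xi β' / M.xi β) ^ 2) / 4) :=
  statement15_general M hβ'0 hβ'β hβ
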